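/- arXiv:1804.09419 — 2 statements merged into one kernel-verified Lean document; each statement's English description precedes it below -/
import Mathlib

section
/- Let α>0, p>1 with 0<αp<N, and 0<γ<N(p−1)/(N−αp). Then there exists a constant C=C(N,α,p,γ)>0 such that for every nonnegative Radon measure μ on ℝ^N, every x∈ℝ^N and every r>0: ∫_{B_r(x)} (W^r_{α,p}[μ](y))^γ dy ≤ C·r^N·(μ(B_{2r}(x))/r^{N−αp})^{γ/(p−1)}. -/
open MeasureTheory Metric Set Filter Bornology
open scoped ENNReal NNReal Topology RealInnerProductSpace

noncomputable section

/-- Euclidean space `ℝ^N`. -/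
abbrev Euc (N : ℕ) : Type := EuclideanSpace ℝ (Fin N)

/-- The `R`-truncated Wolff potential `W^R_{α,p}[μ](x)`; `R = ⊤` gives the full
Wolff potential `W_{α,p}[μ]`. -/
def wolff {N : ℕ} (α p : ℝ) (R : ℝ≥0∞) (μ : Measure (Euc N)) (x : Euc N) : ℝ≥0∞ :=
  ∫⁻ ρ in {ρ : ℝ | 0 < ρ ∧ ENNReal.ofReal ρ < R},
    (μ (ball x ρ) / ENNReal.ofReal (ρ ^ ((N : ℝ) - α * p))) ^ (1 / (p - 1)) /
      ENNReal.ofReal ρ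

/-- The `R`-truncated Riesz potential `I^R_β[μ](x)`; `R = ⊤` gives `I_β[μ]`. -/
def rieszPot {N : ℕ} (β : ℝ) (R : ℝ≥0∞) (μ : Measure (Euc N)) (x : Euc N) : ℝ≥0∞ :=
  ∫⁻ ρ in {ρ : ℝ | 0 < ρ ∧ ENNReal.ofReal ρ < R},
    μ (ball x ρ) / ENNReal.ofReal (ρ ^ ((N : ℝ) - β)) / ENNReal.ofReal ρ

/-- The Riesz capacity `Cap_{I_α,p}`. -/
def rieszCap (N : ℕ) (α p : ℝ) (O : Set (Euc N)) : ℝ≥0∞ :=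
  ⨅ (g : Euc N → ℝ≥0∞) (_ : Measurable g)
    (_ : ∀ x ∈ O, 1 ≤ rieszPot α ⊤ (volume.withDensity g) x),
    ∫⁻ x, g x ^ p

/-- The Bessel kernel of order `α` (up to the normalizing constant `c(N,α)`). -/
def besselKernel (N : ℕ) (α : ℝ) (x : Euc N) : ℝ :=
  ∫ t in Ioi (0 : ℝ),
    Real.exp (-(Real.pi * ‖x‖ ^ 2 / t) - t / (4 * Real.pi)) * t ^ ((α - (N : ℝ)) / 2) / t

/-- The Bessel capacity `Cap_{G_α,p}`. -/
def besselCap (N : ℕ) (α p : ℝ) (O : Set (Euc N)) : ℝ≥0∞ :=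
  ⨅ (g : Euc N → ℝ≥0∞) (_ : Measurable g)
    (_ : ∀ x ∈ O, 1 ≤ ∫⁻ y, ENNReal.ofReal (besselKernel N α (x - y)) * g y),
    ∫⁻ x, g x ^ p

/-- The `R`-truncated fractional maximal function `M^R_γ[μ]`. -/
def fracMax {N : ℕ} (γ : ℝ) (R : ℝ≥0∞) (μ : Measure (Euc N)) (x : Euc N) : ℝ≥0∞ :=
  ⨆ (t : ℝ) (_ : 0 < t) (_ : ENNReal.ofReal t < R),
    μ (ball x t) / ENNReal.ofReal (t ^ ((N : ℝ) - γ))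

/-- The potential `L^R_{α,s}[μ]`. -/
def Lpot {N : ℕ} (α s : ℝ) (R : ℝ≥0∞) (μ : Measure (Euc N)) (x : Euc N) : ℝ≥0∞ :=
  ∫⁻ t in {t : ℝ | 0 < t ∧ ENNReal.ofReal t < R},
    (μ (ball x t) / ENNReal.ofReal (t ^ ((N : ℝ) - α))) ^ s / ENNReal.ofReal t

/-- A mollifier: smooth, nonnegative, supported in the unit ball, of total mass one. -/
def IsMollifier {N : ℕ} (φ : Euc N → ℝ) : Prop :=
  ContDiff ℝ (⊤ : ℕ∞) φ ∧ (∀ x, 0 ≤ φ x) ∧ tsupport φ ⊆ ball 0 1 ∧ (∫ x, φ x) = 1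

/-- The measure with density `φ_n * μ`, where `φ_n(x) = n^N φ(n x)`. -/
def mollified {N : ℕ} (φ : Euc N → ℝ) (n : ℕ) (μ : Measure (Euc N)) : Measure (Euc N) :=
  volume.withDensity fun x =>
    ENNReal.ofReal (∫ y, (n : ℝ) ^ (N : ℕ) * φ ((n : ℝ) • (x - y)) ∂μ)
/-!
Fix `L > K` and an exponent `β ≥ 1` with `L β < d`, where `d` is the dimension. Monotonicity of
`ρ ↦ μ (B_ρ(y))` bounds each quotient `(μ (B_ρ(y)) / ρ ^ L) ^ β`, `ρ < r`, by the potential with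
parameters `(L, β)` truncated at `2 r`; since `L > K`, the leftover power `ρ ^ ((L - K) s - 1)` is
integrable at `0`, so the `(K, s)`-potential is at most a multiple of the power `s / β` of the
`(L, β)`-potential. The latter has finite integral by Tonelli's theorem, because
`μ (B_ρ(y)) ^ β ≤ μ(X) ^ (β - 1) * μ (B_ρ(y))` and `∫ μ (B_ρ(y)) dy = ∫ |B_ρ(z)| dμ(z)`.
Hölder's inequality on `B_r(x)` concludes when `s γ ≤ β`. The bound on `γ` says precisely that
`β = max 1 (s γ)` still leaves room for `L`.
-/

section PowerFunctions

theorem setLIntegral_Ioo_ofReal_rpow_sub_one {R a : ℝ} (hR : 0 < R) (ha : 0 < a) :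
    ∫⁻ ρ in Ioo 0 R, ENNReal.ofReal ρ ^ (a - 1) = ENNReal.ofReal R ^ a / ENNReal.ofReal a := by
  have hint : IntegrableOn (fun ρ : ℝ => ρ ^ (a - 1)) (Ioo 0 R) :=
    (intervalIntegral.integrableOn_Ioo_rpow_iff hR).2 (by linarith)
  calc ∫⁻ ρ in Ioo 0 R, ENNReal.ofReal ρ ^ (a - 1)
      = ∫⁻ ρ in Ioo 0 R, ENNReal.ofReal (ρ ^ (a - 1)) :=
        setLIntegral_congr_fun measurableSet_Ioo fun ρ hρ => ENNReal.ofReal_rpow_of_pos hρ.1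
    _ = ENNReal.ofReal (∫ ρ in Ioo 0 R, ρ ^ (a - 1)) := by
        refine (ofReal_integral_eq_lintegral_ofReal hint ?_).symm
        filter_upwards [ae_restrict_mem measurableSet_Ioo] with ρ hρ
        exact Real.rpow_nonneg hρ.1.le _
    _ = ENNReal.ofReal (R ^ a / a) := by
        rw [← integral_Ioc_eq_integral_Ioo, ← intervalIntegral.integral_of_le hR.le,
          integral_rpow (Or.inl (by linarith)), sub_add_cancel, Real.zero_rpow ha.ne', sub_zero]
    _ = ENNReal.ofReal R ^ a / ENNReal.ofReal a := by
        rw [ENNReal.ofReal_div_of_pos ha, ENNReal.ofReal_rpow_of_pos hR]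

theorem rpow_le_two_rpow_abs_mul_rpow {ρ σ : ℝ} (hρ : 0 < ρ) (hρσ : ρ ≤ σ)
    (hσ : σ ≤ 2 * ρ) (a : ℝ) : ρ ^ a ≤ 2 ^ |a| * σ ^ a := by
  rcases le_total 0 a with ha | ha
  · calc ρ ^ a ≤ σ ^ a := Real.rpow_le_rpow hρ.le hρσ ha
      _ ≤ 2 ^ |a| * σ ^ a := le_mul_of_one_le_left (Real.rpow_nonneg (hρ.le.trans hρσ) a)
          (Real.one_le_rpow one_le_two (abs_nonneg a))
  · calc ρ ^ a = 2 ^ |a| * (2 * ρ) ^ a := by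
          rw [abs_of_nonpos ha, Real.mul_rpow two_pos.le hρ.le, Real.rpow_neg two_pos.le,
            inv_mul_cancel_left₀ (Real.rpow_pos_of_pos two_pos a).ne']
      _ ≤ 2 ^ |a| * σ ^ a := mul_le_mul_of_nonneg_left
          (Real.rpow_le_rpow_of_nonpos (hρ.trans_le hρσ) hσ ha) (by positivity)

theorem lintegral_rpow_le_rpow_lintegral_mul_measure_univ {X : Type*} [MeasurableSpace X]
    {μ : Measure X} {f : X → ℝ≥0∞} (hf : AEMeasurable f μ) {θ : ℝ} (hθ : 0 ≤ θ) (hθ1 : θ ≤ 1) :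
    ∫⁻ x, f x ^ θ ∂μ ≤ (∫⁻ x, f x ∂μ) ^ θ * μ univ ^ (1 - θ) := by
  simpa using ENNReal.lintegral_mul_norm_pow_le hf (aemeasurable_const (b := (1 : ℝ≥0∞)))
    hθ (sub_nonneg.2 hθ1) (add_sub_cancel θ 1)

end PowerFunctions

section TruncatedWolff

variable {X : Type*} [PseudoMetricSpace X] [MeasurableSpace X]

/-- The `R`-truncated Wolff potential on a metric space, with independent homogeneity `K` and
exponent `s`; the potential `W^R_{α,p}[μ]` on `ℝ^N` is the case `K = N - α p`,
`s = 1 / (p - 1)`. -/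
def truncatedWolff (K s R : ℝ) (μ : Measure X) (y : X) : ℝ≥0∞ :=
  ∫⁻ ρ in Ioo 0 R, (μ (ball y ρ) / ENNReal.ofReal (ρ ^ K)) ^ s / ENNReal.ofReal ρ

theorem wolff_ofReal {N : ℕ} {α p r : ℝ} (hr : 0 < r) (μ : Measure (Euc N)) :
    wolff α p (ENNReal.ofReal r) μ = truncatedWolff (N - α * p) (1 / (p - 1)) r μ := by
  ext y
  simp only [wolff, truncatedWolff, ENNReal.ofReal_lt_ofReal_iff hr, Ioo]

theorem truncatedWolff_eq_lintegral_mul {K s : ℝ} (hs : 0 ≤ s) (R : ℝ) (μ : Measure X) (y : X) :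
    truncatedWolff K s R μ y =
      ∫⁻ ρ in Ioo 0 R, μ (ball y ρ) ^ s * ENNReal.ofReal ρ ^ (-(K * s) - 1) := by
  refine setLIntegral_congr_fun measurableSet_Ioo fun ρ hρ => ?_
  have hρ0 : ENNReal.ofReal ρ ≠ 0 := (ENNReal.ofReal_pos.2 hρ.1).ne'
  rw [← ENNReal.ofReal_rpow_of_pos hρ.1, ENNReal.div_rpow_of_nonneg _ _ hs,
    ENNReal.rpow_sub _ _ hρ0 ENNReal.ofReal_ne_top, ENNReal.rpow_neg, ENNReal.rpow_mul,
    ENNReal.rpow_one, div_eq_mul_inv (_ ^ s), mul_div_assoc]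

theorem truncatedWolff_restrict {K s R : ℝ} {μ : Measure X} {S : Set X} {y : X}
    (hS : ball y R ⊆ S) : truncatedWolff K s R (μ.restrict S) y = truncatedWolff K s R μ y := by
  refine setLIntegral_congr_fun measurableSet_Ioo fun ρ hρ => ?_
  simp only [Measure.restrict_eq_self μ ((ball_subset_ball hρ.2.le).trans hS)]

theorem measure_ball_rpow_mul_le_truncatedWolff {K s ρ R : ℝ} (hs : 0 ≤ s) (hρ : 0 < ρ)
    (hρR : 2 * ρ ≤ R) (μ : Measure X) (y : X) :
    μ (ball y ρ) ^ s * ENNReal.ofReal ρ ^ (-(K * s)) ≤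
      ENNReal.ofReal (2 ^ |-(K * s) - 1|) * truncatedWolff K s R μ y := by
  have hpt : ∀ σ ∈ Ioo ρ (2 * ρ), μ (ball y ρ) ^ s * ENNReal.ofReal ρ ^ (-(K * s) - 1) ≤
      ENNReal.ofReal (2 ^ |-(K * s) - 1|) *
        (μ (ball y σ) ^ s * ENNReal.ofReal σ ^ (-(K * s) - 1)) := fun σ hσ => by
    rw [mul_left_comm, ENNReal.ofReal_rpow_of_pos hρ,
      ENNReal.ofReal_rpow_of_pos (hρ.trans hσ.1), ← ENNReal.ofReal_mul (by positivity)]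
    have hσρ := rpow_le_two_rpow_abs_mul_rpow hρ hσ.1.le hσ.2.le (-(K * s) - 1)
    gcongr
    exact hσ.1.le
  calc μ (ball y ρ) ^ s * ENNReal.ofReal ρ ^ (-(K * s))
      = ∫⁻ _ in Ioo ρ (2 * ρ), μ (ball y ρ) ^ s * ENNReal.ofReal ρ ^ (-(K * s) - 1) := by
        have hρ0 : ENNReal.ofReal ρ ≠ 0 := (ENNReal.ofReal_pos.2 hρ).ne'
        rw [setLIntegral_const, Real.volume_Ioo, two_mul, add_sub_cancel_right, mul_assoc,
          ENNReal.rpow_sub _ _ hρ0 ENNReal.ofReal_ne_top, ENNReal.rpow_one,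
          ENNReal.div_mul_cancel hρ0 ENNReal.ofReal_ne_top]
    _ ≤ ∫⁻ σ in Ioo ρ (2 * ρ), ENNReal.ofReal (2 ^ |-(K * s) - 1|) *
          (μ (ball y σ) ^ s * ENNReal.ofReal σ ^ (-(K * s) - 1)) :=
        setLIntegral_mono' measurableSet_Ioo hpt
    _ = ENNReal.ofReal (2 ^ |-(K * s) - 1|) * ∫⁻ σ in Ioo ρ (2 * ρ),
          μ (ball y σ) ^ s * ENNReal.ofReal σ ^ (-(K * s) - 1) :=
        lintegral_const_mul' _ _ ENNReal.ofReal_ne_top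
    _ ≤ ENNReal.ofReal (2 ^ |-(K * s) - 1|) * truncatedWolff K s R μ y := by
        rw [truncatedWolff_eq_lintegral_mul hs]
        gcongr

theorem truncatedWolff_le_rpow_truncatedWolff {K L s β r : ℝ} (hKL : K < L) (hs : 0 < s)
    (hβ : 0 < β) (hr : 0 < r) (μ : Measure X) (y : X) :
    truncatedWolff K s r μ y ≤
      (ENNReal.ofReal (2 ^ |-(L * β) - 1|) * truncatedWolff L β (2 * r) μ y) ^ (s / β) *
        (ENNReal.ofReal r ^ ((L - K) * s) / ENNReal.ofReal ((L - K) * s)) := by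
  rw [truncatedWolff_eq_lintegral_mul hs.le,
    ← setLIntegral_Ioo_ofReal_rpow_sub_one hr (mul_pos (sub_pos.2 hKL) hs),
    ← lintegral_const_mul _ (by fun_prop)]
  refine setLIntegral_mono' measurableSet_Ioo fun ρ hρ => ?_
  have hρ0 : ENNReal.ofReal ρ ≠ 0 := (ENNReal.ofReal_pos.2 hρ.1).ne'
  have hsβ : 0 ≤ s / β := (div_pos hs hβ).le
  calc μ (ball y ρ) ^ s * ENNReal.ofReal ρ ^ (-(K * s) - 1)
      = (μ (ball y ρ) ^ β * ENNReal.ofReal ρ ^ (-(L * β))) ^ (s / β) *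
          ENNReal.ofReal ρ ^ ((L - K) * s - 1) := by
        rw [ENNReal.mul_rpow_of_nonneg _ _ hsβ, ← ENNReal.rpow_mul, ← ENNReal.rpow_mul, mul_assoc,
          ← ENNReal.rpow_add _ _ hρ0 ENNReal.ofReal_ne_top]
        congr 2 <;> field_simp
        ring
    _ ≤ _ := by
        have hρr : 2 * ρ ≤ 2 * r := mul_le_mul_of_nonneg_left hρ.2.le two_pos.le
        exact mul_le_mul_left (ENNReal.rpow_le_rpow
          (measure_ball_rpow_mul_le_truncatedWolff hβ.le hρ.1 hρr μ y) hsβ) _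

theorem exists_truncatedWolff_rpow_le {K L s β γ : ℝ} (hKL : K < L) (hs : 0 < s) (hβ : 0 < β)
    (hγ : 0 ≤ γ) :
    ∃ C : ℝ≥0, ∀ r : ℝ, 0 < r → ∀ (μ : Measure X) (y : X), truncatedWolff K s r μ y ^ γ ≤
      C * ENNReal.ofReal r ^ ((L - K) * (s * γ)) *
        truncatedWolff L β (2 * r) μ y ^ (s * γ / β) := by
  have hsβ : 0 ≤ s / β := (div_pos hs hβ).le
  obtain ⟨C, hC⟩ : ∃ C : ℝ≥0, (C : ℝ≥0∞) = (ENNReal.ofReal (2 ^ |-(L * β) - 1|) ^ (s / β) *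
      (ENNReal.ofReal ((L - K) * s))⁻¹) ^ γ := ⟨_, ENNReal.coe_toNNReal (by finiteness)⟩
  refine ⟨C, fun r hr μ y => (ENNReal.rpow_le_rpow
    (truncatedWolff_le_rpow_truncatedWolff hKL hs hβ hr μ y) hγ).trans_eq ?_⟩
  rw [hC, mul_div_right_comm s γ β, ← mul_assoc (L - K),
    ENNReal.rpow_mul (truncatedWolff L β (2 * r) μ y), ENNReal.rpow_mul (ENNReal.ofReal r) _ γ,
    ENNReal.mul_rpow_of_nonneg _ _ hsβ, ← ENNReal.mul_rpow_of_nonneg _ _ hγ,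
    ← ENNReal.mul_rpow_of_nonneg _ _ hγ, div_eq_mul_inv (_ ^ ((L - K) * s))]
  ring_nf

end TruncatedWolff

section UpperRegular

variable {X : Type*} [PseudoMetricSpace X] [MeasurableSpace X]

/-- Upper `d`-regularity (the upper half of Ahlfors regularity) of a measure, with constant `A`.
It replaces the exact scaling of Lebesgue measure on balls. -/
def IsUpperRegular (A : ℝ≥0) (d : ℝ) (ν : Measure X) : Prop :=
  ∀ (x : X) (ρ : ℝ), 0 < ρ → ν (ball x ρ) ≤ A * ENNReal.ofReal ρ ^ d

theorem isUpperRegular_addHaar {E : Type*} [NormedAddCommGroup E] [NormedSpace ℝ E]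
    [FiniteDimensional ℝ E] [MeasurableSpace E] [BorelSpace E] (ν : Measure E)
    [ν.IsAddHaarMeasure] :
    IsUpperRegular (ν (ball 0 1)).toNNReal (Module.finrank ℝ E) ν := fun x ρ hρ => by
  rw [Measure.addHaar_ball_of_pos ν x hρ, ENNReal.coe_toNNReal measure_ball_lt_top.ne,
    ENNReal.rpow_natCast, ENNReal.ofReal_pow hρ.le, mul_comm]

theorem isUpperRegular_volume_euc (N : ℕ) :
    IsUpperRegular (volume (ball (0 : Euc N) 1)).toNNReal N (volume : Measure (Euc N)) := by
  simpa only [finrank_euclideanSpace_fin] using isUpperRegular_addHaar (volume : Measure (Euc N))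

theorem IsUpperRegular.isLocallyFiniteMeasure {A : ℝ≥0} {d : ℝ} {ν : Measure X}
    (hν : IsUpperRegular A d ν) : IsLocallyFiniteMeasure ν :=
  ⟨fun x => ⟨ball x 1, ball_mem_nhds x one_pos,
    (hν x 1 one_pos).trans_lt (by simp)⟩⟩

variable [SecondCountableTopology X] [OpensMeasurableSpace X]

theorem measurable_measure_ball (μ : Measure X) [SFinite μ] :
    Measurable fun q : X × ℝ => μ (ball q.1 q.2) := by
  have hs : MeasurableSet {w : (X × ℝ) × X | dist w.2 w.1.1 < w.1.2} :=
    (isOpen_lt (by fun_prop) (by fun_prop)).measurableSet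
  exact measurable_measure_prodMk_left hs

theorem measurable_measure_ball_left (μ : Measure X) [SFinite μ] (σ : ℝ) :
    Measurable fun y : X => μ (ball y σ) :=
  (measurable_measure_ball μ).comp measurable_prodMk_right

theorem lintegral_measure_ball_comm (μ ν : Measure X) [SFinite μ] [SFinite ν] (σ : ℝ) :
    ∫⁻ y, μ (ball y σ) ∂ν = ∫⁻ z, ν (ball z σ) ∂μ := by
  have hs : MeasurableSet {w : X × X | dist w.2 w.1 < σ} :=
    (isOpen_lt (by fun_prop) (by fun_prop)).measurableSet
  have hsymm : ∀ z : X, (fun y => (y, z)) ⁻¹' {w : X × X | dist w.2 w.1 < σ} = ball z σ :=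
    fun z => ext fun y => by simp only [mem_preimage, mem_ofPred_eq, mem_ball, dist_comm]
  calc ∫⁻ y, μ (ball y σ) ∂ν = ν.prod μ {w | dist w.2 w.1 < σ} := (Measure.prod_apply hs).symm
    _ = ∫⁻ z, ν (ball z σ) ∂μ := by simp only [Measure.prod_apply_symm hs, hsymm]

variable {A : ℝ≥0} {d : ℝ} {ν : Measure X} (μ : Measure X) [SFinite μ]

theorem measurable_measure_ball_rpow_mul (s a : ℝ) :
    Measurable fun q : X × ℝ => μ (ball q.1 q.2) ^ s * ENNReal.ofReal q.2 ^ a :=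
  ((measurable_measure_ball μ).pow_const s).mul (by fun_prop)

theorem measurable_truncatedWolff {K s R : ℝ} (hs : 0 ≤ s) :
    Measurable (truncatedWolff K s R μ) := by
  simp only [funext (truncatedWolff_eq_lintegral_mul hs R μ)]
  exact (measurable_measure_ball_rpow_mul μ s _).lintegral_prod_right'

theorem IsUpperRegular.lintegral_measure_ball_rpow_le (hν : IsUpperRegular A d ν) {β σ : ℝ}
    (hβ : 1 ≤ β) (hσ : 0 < σ) :
    ∫⁻ y, μ (ball y σ) ^ β ∂ν ≤ A * μ univ ^ β * ENNReal.ofReal σ ^ d := by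
  have := hν.isLocallyFiniteMeasure
  have hsplit : ∀ a : ℝ≥0∞, a ^ β = a ^ (β - 1) * a := fun a => by
    simpa using ENNReal.rpow_add_of_nonneg (x := a) (β - 1) 1 (sub_nonneg.2 hβ) zero_le_one
  calc ∫⁻ y, μ (ball y σ) ^ β ∂ν ≤ ∫⁻ y, μ univ ^ (β - 1) * μ (ball y σ) ∂ν := by
        gcongr with y
        rw [hsplit]
        gcongr
        exact subset_univ _
    _ = μ univ ^ (β - 1) * ∫⁻ z, ν (ball z σ) ∂μ := by
        rw [← lintegral_measure_ball_comm, lintegral_const_mul _ (measurable_measure_ball_left μ σ)]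
    _ ≤ μ univ ^ (β - 1) * ∫⁻ _, A * ENNReal.ofReal σ ^ d ∂μ := by
        gcongr with z
        exact hν z σ hσ
    _ = A * μ univ ^ β * ENNReal.ofReal σ ^ d := by
        rw [lintegral_const, hsplit]
        ring

theorem IsUpperRegular.lintegral_truncatedWolff_le (hν : IsUpperRegular A d ν) {L β R : ℝ}
    (hβ : 1 ≤ β) (hLβ : L * β < d) (hR : 0 < R) :
    ∫⁻ y, truncatedWolff L β R μ y ∂ν ≤
      A * μ univ ^ β * (ENNReal.ofReal R ^ (d - L * β) / ENNReal.ofReal (d - L * β)) := by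
  have := hν.isLocallyFiniteMeasure
  calc ∫⁻ y, truncatedWolff L β R μ y ∂ν
      = ∫⁻ ρ in Ioo 0 R, ∫⁻ y, μ (ball y ρ) ^ β * ENNReal.ofReal ρ ^ (-(L * β) - 1) ∂ν := by
        simp only [truncatedWolff_eq_lintegral_mul (zero_le_one.trans hβ)]
        exact lintegral_lintegral_swap (measurable_measure_ball_rpow_mul μ β _).aemeasurable
    _ ≤ ∫⁻ ρ in Ioo 0 R, A * μ univ ^ β * ENNReal.ofReal ρ ^ (d - L * β - 1) := by
        refine setLIntegral_mono' measurableSet_Ioo fun ρ hρ => ?_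
        have hρ0 : ENNReal.ofReal ρ ≠ 0 := (ENNReal.ofReal_pos.2 hρ.1).ne'
        rw [lintegral_mul_const _ ((measurable_measure_ball_left μ ρ).pow_const β),
          show d - L * β - 1 = d + (-(L * β) - 1) by ring,
          ENNReal.rpow_add _ _ hρ0 ENNReal.ofReal_ne_top, ← mul_assoc]
        gcongr
        exact hν.lintegral_measure_ball_rpow_le μ hβ hρ.1
    _ = _ := by
        rw [lintegral_const_mul _ (by fun_prop),
          setLIntegral_Ioo_ofReal_rpow_sub_one hR (sub_pos.2 hLβ)]

theorem IsUpperRegular.setLIntegral_truncatedWolff_rpow_le (hν : IsUpperRegular A d ν)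
    {L β R r θ : ℝ} (hβ : 1 ≤ β) (hLβ : L * β < d) (hR : 0 < R) (hr : 0 < r) (hθ : 0 ≤ θ)
    (hθ1 : θ ≤ 1) (x : X) :
    ∫⁻ y in ball x r, truncatedWolff L β R μ y ^ θ ∂ν ≤
      (A * μ univ ^ β * (ENNReal.ofReal R ^ (d - L * β) / ENNReal.ofReal (d - L * β))) ^ θ *
        (A * ENNReal.ofReal r ^ d) ^ (1 - θ) := by
  have hmeas := measurable_truncatedWolff (K := L) (R := R) μ (zero_le_one.trans hβ)
  calc ∫⁻ y in ball x r, truncatedWolff L β R μ y ^ θ ∂ν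
      ≤ (∫⁻ y in ball x r, truncatedWolff L β R μ y ∂ν) ^ θ * ν (ball x r) ^ (1 - θ) := by
        simpa only [Measure.restrict_apply_univ] using
          lintegral_rpow_le_rpow_lintegral_mul_measure_univ (μ := ν.restrict (ball x r))
            hmeas.aemeasurable hθ hθ1
    _ ≤ _ := mul_le_mul'
        (ENNReal.rpow_le_rpow ((setLIntegral_le_lintegral _ _).trans
          (hν.lintegral_truncatedWolff_le μ hβ hLβ hR)) hθ)
        (ENNReal.rpow_le_rpow (hν x r hr) (sub_nonneg.2 hθ1))

variable (X) (A)

theorem exists_setLIntegral_truncatedWolff_rpow_le_of_one_le {L β θ : ℝ} (hβ : 1 ≤ β)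
    (hLβ : L * β < d) (hθ : 0 ≤ θ) (hθ1 : θ ≤ 1) :
    ∃ C : ℝ≥0, ∀ ν : Measure X, IsUpperRegular A d ν → ∀ (μ : Measure X) [SFinite μ] (x : X)
      (r : ℝ), 0 < r → ∫⁻ y in ball x r, truncatedWolff L β (2 * r) μ y ^ θ ∂ν ≤
        C * ENNReal.ofReal r ^ (d - L * (β * θ)) * μ univ ^ (β * θ) := by
  have hd : 0 < d - L * β := sub_pos.2 hLβ
  obtain ⟨C, hC⟩ : ∃ C : ℝ≥0, (C : ℝ≥0∞) =
      (A * 2 ^ (d - L * β) / ENNReal.ofReal (d - L * β)) ^ θ * A ^ (1 - θ) :=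
    ⟨_, ENNReal.coe_toNNReal (by finiteness)⟩
  refine ⟨C, fun ν hν μ _ x r hr =>
    (hν.setLIntegral_truncatedWolff_rpow_le μ hβ hLβ (mul_pos two_pos hr) hr hθ hθ1
      x).trans_eq ?_⟩
  have hr0 : ENNReal.ofReal r ≠ 0 := (ENNReal.ofReal_pos.2 hr).ne'
  rw [hC, ENNReal.ofReal_mul two_pos.le, ENNReal.ofReal_ofNat,
    ENNReal.mul_rpow_of_nonneg _ _ hd.le, ENNReal.rpow_mul (μ univ),
    show d - L * (β * θ) = (d - L * β) * θ + d * (1 - θ) by ring,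
    ENNReal.rpow_add _ _ hr0 ENNReal.ofReal_ne_top, ENNReal.rpow_mul, ENNReal.rpow_mul]
  simp only [div_eq_mul_inv, ENNReal.mul_rpow_of_nonneg _ _ hθ,
    ENNReal.mul_rpow_of_nonneg _ _ (sub_nonneg.2 hθ1)]
  ring

theorem exists_setLIntegral_truncatedWolff_rpow_le {K s γ : ℝ} (hs : 0 < s) (hγ : 0 ≤ γ)
    (hK : K < d) (hKγ : K * (s * γ) < d) :
    ∃ C : ℝ≥0, ∀ ν : Measure X, IsUpperRegular A d ν → ∀ (μ : Measure X) [SFinite μ] (x : X)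
      (r : ℝ), 0 < r → ∫⁻ y in ball x r, truncatedWolff K s r μ y ^ γ ∂ν ≤
        C * ENNReal.ofReal r ^ (d - K * (s * γ)) * μ univ ^ (s * γ) := by
  obtain ⟨β, hβ, hsγβ, hKβ⟩ : ∃ β, 1 ≤ β ∧ s * γ ≤ β ∧ K * β < d :=
    ⟨max 1 (s * γ), le_max_left _ _, le_max_right _ _, by
      rcases max_choice 1 (s * γ) with h | h <;> simpa only [h, mul_one]⟩
  have hβ0 : 0 < β := zero_lt_one.trans_le hβ
  obtain ⟨L, hKL, hLβ⟩ := exists_between ((lt_div_iff₀ hβ0).2 hKβ)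
  obtain ⟨C₁, h₁⟩ := exists_truncatedWolff_rpow_le (X := X) hKL hs hβ0 hγ
  obtain ⟨C₂, h₂⟩ := exists_setLIntegral_truncatedWolff_rpow_le_of_one_le X A hβ
    ((lt_div_iff₀ hβ0).1 hLβ) (div_nonneg (mul_nonneg hs.le hγ) hβ0.le) ((div_le_one hβ0).2 hsγβ)
  rw [mul_div_cancel₀ _ hβ0.ne'] at h₂
  refine ⟨C₁ * C₂, fun ν hν μ _ x r hr => ?_⟩
  have hr0 : ENNReal.ofReal r ≠ 0 := (ENNReal.ofReal_pos.2 hr).ne'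
  calc ∫⁻ y in ball x r, truncatedWolff K s r μ y ^ γ ∂ν
      ≤ ∫⁻ y in ball x r, C₁ * ENNReal.ofReal r ^ ((L - K) * (s * γ)) *
          truncatedWolff L β (2 * r) μ y ^ (s * γ / β) ∂ν := lintegral_mono fun y => h₁ r hr μ y
    _ = C₁ * ENNReal.ofReal r ^ ((L - K) * (s * γ)) *
          ∫⁻ y in ball x r, truncatedWolff L β (2 * r) μ y ^ (s * γ / β) ∂ν :=
        lintegral_const_mul' _ _ (by finiteness)
    _ ≤ C₁ * ENNReal.ofReal r ^ ((L - K) * (s * γ)) *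
          (C₂ * ENNReal.ofReal r ^ (d - L * (s * γ)) * μ univ ^ (s * γ)) :=
        mul_le_mul_right (h₂ ν hν μ x r hr) _
    _ = (C₁ * C₂ : ℝ≥0) * ENNReal.ofReal r ^ (d - K * (s * γ)) * μ univ ^ (s * γ) := by
        rw [show d - K * (s * γ) = (L - K) * (s * γ) + (d - L * (s * γ)) by ring,
          ENNReal.rpow_add _ _ hr0 ENNReal.ofReal_ne_top, ENNReal.coe_mul]
        ring

end UpperRegular

theorem stmt14_general (X : Type*) [PseudoMetricSpace X] [SecondCountableTopology X]
    [MeasurableSpace X] [OpensMeasurableSpace X] (A : ℝ≥0) {d K s γ : ℝ} (hs : 0 < s)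
    (hγ : 0 < γ) (hK : K < d) (hKγ : K * (s * γ) < d) :
    ∃ C > 0, ∀ ν : Measure X, IsUpperRegular A d ν → ∀ (μ : Measure X) (x : X) (r : ℝ), 0 < r →
      ∫⁻ y in ball x r, truncatedWolff K s r μ y ^ γ ∂ν ≤
        ENNReal.ofReal (C * r ^ d) *
          (μ (ball x (2 * r)) / ENNReal.ofReal (r ^ K)) ^ (s * γ) := by
  obtain ⟨C, hC⟩ := exists_setLIntegral_truncatedWolff_rpow_le X A hs hγ.le hK hKγ
  refine ⟨C + 1, by positivity, fun ν hν μ x r hr => ?_⟩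
  have hsγ : 0 < s * γ := mul_pos hs hγ
  rcases eq_or_ne (μ (ball x (2 * r))) ∞ with htop | hfin
  · rw [htop, ENNReal.top_div_of_ne_top ENNReal.ofReal_ne_top, ENNReal.top_rpow_of_pos hsγ,
      ENNReal.mul_top (ENNReal.ofReal_pos.2 (by positivity)).ne']
    exact le_top
  have : Fact (μ (ball x (2 * r)) < ∞) := ⟨hfin.lt_top⟩
  have hr0 : ENNReal.ofReal r ≠ 0 := (ENNReal.ofReal_pos.2 hr).ne'
  calc ∫⁻ y in ball x r, truncatedWolff K s r μ y ^ γ ∂ν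
      = ∫⁻ y in ball x r, truncatedWolff K s r (μ.restrict (ball x (2 * r))) y ^ γ ∂ν := by
        refine setLIntegral_congr_fun measurableSet_ball fun y hy => ?_
        have hsub : ball y r ⊆ ball x (2 * r) := ball_subset_ball' (by linarith [mem_ball.1 hy])
        simp only [truncatedWolff_restrict hsub]
    _ ≤ C * ENNReal.ofReal r ^ (d - K * (s * γ)) * μ (ball x (2 * r)) ^ (s * γ) := by
        simpa only [Measure.restrict_apply_univ] using hC ν hν (μ.restrict _) x r hr
    _ ≤ ENNReal.ofReal (C + 1) * ENNReal.ofReal r ^ (d - K * (s * γ)) *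
          μ (ball x (2 * r)) ^ (s * γ) := by
        gcongr
        rw [← ENNReal.ofReal_coe_nnreal]
        exact ENNReal.ofReal_le_ofReal (le_add_of_nonneg_right zero_le_one)
    _ = _ := by
        rw [ENNReal.rpow_sub _ _ hr0 ENNReal.ofReal_ne_top, ENNReal.rpow_mul,
          ENNReal.div_rpow_of_nonneg _ _ hsγ.le, ENNReal.ofReal_mul (by positivity),
          ← ENNReal.ofReal_rpow_of_pos hr, ← ENNReal.ofReal_rpow_of_pos hr]
        simp only [div_eq_mul_inv]
        ring

/-- Local integral estimate for the truncated Wolff potential. -/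
theorem stmt14 (N : ℕ) (α p γ : ℝ) (hα : 0 < α) (hp : 1 < p) (hαp : α * p < (N : ℝ))
    (hγ0 : 0 < γ) (hγ : γ < (N : ℝ) * (p - 1) / ((N : ℝ) - α * p)) :
    ∃ C > 0, ∀ μ : Measure (Euc N), IsLocallyFiniteMeasure μ →
      ∀ (x : Euc N) (r : ℝ), 0 < r →
      (∫⁻ y in ball x r, (wolff α p (ENNReal.ofReal r) μ y) ^ γ) ≤
        ENNReal.ofReal (C * r ^ (N : ℕ)) *
          (μ (ball x (2 * r)) / ENNReal.ofReal (r ^ ((N : ℝ) - α * p))) ^ (γ / (p - 1)) := by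
  have hK : 0 < (N : ℝ) - α * p := sub_pos.2 hαp
  have hp1 : 0 < p - 1 := sub_pos.2 hp
  have hKγ : ((N : ℝ) - α * p) * (1 / (p - 1) * γ) < N := by
    rwa [one_div_mul_eq_div, ← mul_div_assoc, div_lt_iff₀ hp1, ← lt_div_iff₀' hK]
  obtain ⟨C, hC, h⟩ := stmt14_general (Euc N) (volume (ball (0 : Euc N) 1)).toNNReal
    (one_div_pos.2 hp1) hγ0 (sub_lt_self _ (mul_pos hα (zero_lt_one.trans hp))) hKγ
  refine ⟨C, hC, fun μ _ x r hr => ?_⟩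
  simpa only [wolff_ofReal hr, Real.rpow_natCast, one_div_mul_eq_div]
    using h volume (isUpperRegular_volume_euc N) μ x r hr
end
end

section
/- Let α>0, 1<p<N/α and q>p−1. Let μ be a nonnegative Radon measure on ℝ^N such that for some C>0, ∫_{ℝ^N} (W_{α,p}[χ_{B_t(x)}μ](y))^q dy ≤ C·μ(B_t(x)) for every x∈ℝ^N and t>0. Then there exists a constant C'>0, depending only on N,α,p,q,C, such that μ(B_t(x)) ≤ C'·t^{N − αpq/(q−p+1)} for every x∈ℝ^N and t>0. -/
/-!
For `y ∈ B_t(x)` the ball `B_{2t}(y)` contains `B_t(x)`, so the scales `2t < ρ < 4t` alone give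
`W[χ_{B_t(x)}μ](y) ≳ (μ(B_t(x)) / t^{N-αp})^{1/(p-1)}`. Integrating the `q`-th power of this bound
over `B_t(x)`, the testing inequality yields
`t^N (μ(B_t(x)) / t^{N-αp})^{q/(p-1)} ≲ μ(B_t(x))`, which can be solved for `μ(B_t(x))` because
`q/(p-1) > 1`.
-/

open MeasureTheory Metric Set Filter Bornology
open scoped ENNReal NNReal Topology RealInnerProductSpace

noncomputable section

theorem rpow_le_two_rpow_abs_mul_rpow_s19 {r ρ : ℝ} (b : ℝ) (hr : 0 < r) (hrρ : r ≤ ρ)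
    (hρr : ρ ≤ 2 * r) : ρ ^ b ≤ 2 ^ |b| * r ^ b := by
  have one_le_ratio : 1 ≤ ρ / r := (one_le_div hr).2 hrρ
  have ratio_le_two : ρ / r ≤ 2 := (div_le_iff₀ hr).2 hρr
  calc ρ ^ b = (ρ / r) ^ b * r ^ b := by
        rw [← Real.mul_rpow (by positivity) hr.le, div_mul_cancel₀ _ hr.ne']
    _ ≤ (ρ / r) ^ |b| * r ^ b := by
        gcongr
        exact le_abs_self b
    _ ≤ 2 ^ |b| * r ^ b := by gcongr

theorem le_mul_rpow_of_mul_div_rpow_le {A B T m σ : ℝ} (hσ : 1 < σ) (hA : 0 < A) (hB : 0 ≤ B)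
    (hT : 0 < T) (hm : 0 ≤ m) (h : A * (m / T) ^ σ ≤ B * m) :
    m ≤ T * (B * T / A) ^ (σ - 1)⁻¹ := by
  rcases hm.eq_or_lt with rfl | hm
  · positivity
  have hd : 0 < m / T := div_pos hm hT
  have cancelled : (m / T) ^ (σ - 1) ≤ B * T / A := by
    rw [Real.rpow_sub_one hd.ne', div_le_iff₀ hd, div_mul_div_comm, le_div_iff₀ (by positivity)]
    calc (m / T) ^ σ * (A * T) = A * (m / T) ^ σ * T := by ring
      _ ≤ B * m * T := by gcongr
      _ = B * T * m := by ring
  rw [← div_le_iff₀' hT]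
  exact (Real.le_rpow_inv_iff_of_pos hd.le (by positivity) (sub_pos.2 hσ)).2 cancelled

theorem mul_rpow_mul_mul_rpow_div_rpow {k K t : ℝ} (b n s : ℝ) (hK : 0 ≤ K) (ht : 0 < t) :
    k * t ^ b * (K * t ^ b / t ^ n) ^ s = k * K ^ s * t ^ (b + (b - n) * s) := by
  rw [mul_div_assoc, ← Real.rpow_sub ht, Real.mul_rpow hK (by positivity), ← Real.rpow_mul ht.le,
    Real.rpow_add ht]
  ring

theorem growth_exponent_eq {n β p q : ℝ} (hp : p - 1 ≠ 0) (hq : q - p + 1 ≠ 0) :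
    n - β + (n - β - n) * (q / (p - 1) - 1)⁻¹ = n - β * q / (q - p + 1) := by
  have inv_eq : (q / (p - 1) - 1)⁻¹ = (p - 1) / (q - p + 1) := by
    rw [div_sub_one hp, inv_div, sub_sub_eq_add_sub, add_sub_right_comm]
  rw [inv_eq]
  field_simp
  ring

theorem measureReal_ball_pos {X : Type*} [PseudoMetricSpace X] [ProperSpace X]
    [MeasurableSpace X] (μ : Measure X) [μ.IsOpenPosMeasure] [IsFiniteMeasureOnCompacts μ] (x : X)
    {r : ℝ} (hr : 0 < r) : 0 < μ.real (ball x r) :=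
  ENNReal.toReal_pos (measure_ball_pos μ x hr).ne' measure_ball_lt_top.ne

theorem addHaar_real_ball_of_pos {E : Type*} [NormedAddCommGroup E] [NormedSpace ℝ E]
    [MeasurableSpace E] [BorelSpace E] [FiniteDimensional ℝ E] (μ : Measure E)
    [μ.IsAddHaarMeasure] (x : E) {r : ℝ} (hr : 0 < r) :
    μ.real (ball x r) = r ^ Module.finrank ℝ E * μ.real (ball 0 1) := by
  rw [measureReal_def, Measure.addHaar_ball_of_pos μ x hr, ENNReal.toReal_mul,
    ENNReal.toReal_ofReal (by positivity), measureReal_def]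

section Wolff

variable {N : ℕ} {α p : ℝ} {R : ℝ≥0∞}

theorem half_mul_rpow_le_wolff (hp : 1 ≤ p) (μ : Measure (Euc N)) (y : Euc N) {r : ℝ}
    (hr : 0 < r) (hrR : ENNReal.ofReal (2 * r) ≤ R) :
    ENNReal.ofReal (1 / 2) *
        (μ (ball y r) / ENNReal.ofReal (2 ^ |(N : ℝ) - α * p| * r ^ ((N : ℝ) - α * p))) ^
          (1 / (p - 1)) ≤
      wolff α p R μ y := by
  have : 0 ≤ 1 / (p - 1) := one_div_nonneg.2 (sub_nonneg.2 hp)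
  set b := (N : ℝ) - α * p
  set D := (μ (ball y r) / ENNReal.ofReal (2 ^ |b| * r ^ b)) ^ (1 / (p - 1)) with hD
  have scales_subset : Ioo r (2 * r) ⊆ {ρ : ℝ | 0 < ρ ∧ ENNReal.ofReal ρ < R} := fun ρ hρ =>
    ⟨hr.trans hρ.1,
      ((ENNReal.ofReal_lt_ofReal_iff (by positivity)).2 hρ.2).trans_le hrR⟩
  calc ENNReal.ofReal (1 / 2) * D
      = ∫⁻ _ in Ioo r (2 * r), D / ENNReal.ofReal (2 * r) := by
        have half_eq : (1 / 2 : ℝ) = (2 * r)⁻¹ * (2 * r - r) := by field_simp; norm_num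
        rw [setLIntegral_const, Real.volume_Ioo, half_eq, ENNReal.ofReal_mul (by positivity),
          ENNReal.ofReal_inv_of_pos (by positivity), div_eq_mul_inv, mul_comm, mul_assoc]
    _ ≤ ∫⁻ ρ in Ioo r (2 * r),
          (μ (ball y ρ) / ENNReal.ofReal (ρ ^ b)) ^ (1 / (p - 1)) / ENNReal.ofReal ρ := by
        refine setLIntegral_mono' measurableSet_Ioo fun ρ ⟨hrρ, hρr⟩ => ?_
        have ball_le : μ (ball y r) ≤ μ (ball y ρ) := measure_mono (ball_subset_ball hrρ.le)
        have rpow_le := rpow_le_two_rpow_abs_mul_rpow_s19 b hr hrρ.le hρr.le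
        rw [hD]
        gcongr
    _ ≤ wolff α p R μ y := lintegral_mono_set scales_subset

theorem half_mul_rpow_le_wolff_restrict_ball (hp : 1 ≤ p) (μ : Measure (Euc N)) {x y : Euc N}
    {t : ℝ} (hy : y ∈ ball x t) (htR : ENNReal.ofReal (4 * t) ≤ R) :
    ENNReal.ofReal (1 / 2) *
        (μ (ball x t) /
          ENNReal.ofReal (2 ^ |(N : ℝ) - α * p| * (2 * t) ^ ((N : ℝ) - α * p))) ^ (1 / (p - 1)) ≤
      wolff α p R (μ.restrict (ball x t)) y := by
  have ht : 0 < t := pos_of_mem_ball hy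
  have ball_subset : ball x t ⊆ ball y (2 * t) :=
    ball_subset_ball' (by linarith [mem_ball'.1 hy])
  have restrict_eq : μ.restrict (ball x t) (ball y (2 * t)) = μ (ball x t) := by
    rw [Measure.restrict_apply measurableSet_ball, inter_eq_right.2 ball_subset]
  rw [← restrict_eq]
  exact half_mul_rpow_le_wolff hp _ y (by positivity) (by convert htR using 2; ring)

theorem volume_ball_mul_rpow_le_lintegral_wolff_restrict_ball {q : ℝ} (hp : 1 ≤ p) (hq : 0 ≤ q)
    (μ : Measure (Euc N)) (x : Euc N) {t : ℝ} (htR : ENNReal.ofReal (4 * t) ≤ R) :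
    volume (ball x t) *
        (ENNReal.ofReal (1 / 2) *
          (μ (ball x t) /
            ENNReal.ofReal (2 ^ |(N : ℝ) - α * p| * (2 * t) ^ ((N : ℝ) - α * p))) ^
              (1 / (p - 1))) ^ q ≤
      ∫⁻ y in ball x t, wolff α p R (μ.restrict (ball x t)) y ^ q := by
  rw [mul_comm, ← setLIntegral_const]
  exact setLIntegral_mono' measurableSet_ball fun y hy =>
    ENNReal.rpow_le_rpow (half_mul_rpow_le_wolff_restrict_ball hp μ hy htR) hq

theorem measureReal_ball_le_of_lintegral_wolff_restrict_ball_le {q C : ℝ} (hp : 1 < p)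
    (hq : p - 1 < q) (hC : 0 ≤ C) {μ : Measure (Euc N)} {x : Euc N} {t : ℝ} (ht : 0 < t)
    (htR : ENNReal.ofReal (4 * t) ≤ R) (hμ : μ (ball x t) ≠ ∞)
    (testing : ∫⁻ y in ball x t, wolff α p R (μ.restrict (ball x t)) y ^ q ≤
      ENNReal.ofReal C * μ (ball x t)) :
    μ.real (ball x t) ≤
      2 ^ |(N : ℝ) - α * p| * (2 * t) ^ ((N : ℝ) - α * p) *
        (C * (2 ^ |(N : ℝ) - α * p| * (2 * t) ^ ((N : ℝ) - α * p)) /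
          (volume.real (ball x t) * (1 / 2) ^ q)) ^ (q / (p - 1) - 1)⁻¹ := by
  have hp0 : 0 < p - 1 := sub_pos.2 hp
  have power_le := ENNReal.toReal_mono (ENNReal.mul_ne_top ENNReal.ofReal_ne_top hμ)
    ((volume_ball_mul_rpow_le_lintegral_wolff_restrict_ball hp.le (hp0.trans hq).le μ x
      htR).trans testing)
  set T := (2 : ℝ) ^ |(N : ℝ) - α * p| * (2 * t) ^ ((N : ℝ) - α * p)
  have hT : 0 < T := by positivity
  have volume_pos := measureReal_ball_pos volume x ht
  refine le_mul_rpow_of_mul_div_rpow_le ((one_lt_div hp0).2 hq) (by positivity) hC hT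
    measureReal_nonneg ?_
  simp only [ENNReal.toReal_mul, ← ENNReal.toReal_rpow, ENNReal.toReal_div,
    ENNReal.toReal_ofReal hC, ENNReal.toReal_ofReal hT.le,
    ENNReal.toReal_ofReal one_half_pos.le, ← measureReal_def] at power_le
  calc volume.real (ball x t) * (1 / 2) ^ q * (μ.real (ball x t) / T) ^ (q / (p - 1))
      = volume.real (ball x t) *
          (1 / 2 * (μ.real (ball x t) / T) ^ (1 / (p - 1))) ^ q := by
        rw [Real.mul_rpow (by positivity) (by positivity), ← Real.rpow_mul (by positivity),
          one_div_mul_eq_div, mul_assoc]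
    _ ≤ C * μ.real (ball x t) := power_le

end Wolff

theorem stmt19_general (N : ℕ) (α p q : ℝ) (hp : 1 < p) (hq : p - 1 < q) :
    ∀ C : ℝ, 0 < C → ∃ C' > 0, ∀ (μ : Measure (Euc N)) (R : ℝ≥0∞) (x : Euc N) (t : ℝ), 0 < t →
      ENNReal.ofReal (4 * t) ≤ R → μ (ball x t) ≠ ∞ →
      (∫⁻ y in ball x t, (wolff α p R (μ.restrict (ball x t)) y) ^ q) ≤
        ENNReal.ofReal C * μ (ball x t) →
      μ (ball x t) ≤
        ENNReal.ofReal (C' * t ^ ((N : ℝ) - α * p * q / (q - p + 1))) := by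
  intro C hC
  set b := (N : ℝ) - α * p
  set v := volume.real (ball (0 : Euc N) 1)
  have hv : 0 < v := measureReal_ball_pos volume 0 one_pos
  set k : ℝ := 2 ^ |b| * 2 ^ b
  refine ⟨k * (C * k / (v * (1 / 2) ^ q)) ^ (q / (p - 1) - 1)⁻¹, by positivity,
    fun μ R x t ht htR hμ testing => ?_⟩
  have scale_eq : 2 ^ |b| * (2 * t) ^ b = k * t ^ b := by
    rw [Real.mul_rpow zero_le_two ht.le, mul_assoc]
  have volume_eq : volume.real (ball x t) = t ^ (N : ℝ) * v := by
    rw [addHaar_real_ball_of_pos volume x ht, finrank_euclideanSpace_fin, Real.rpow_natCast]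
  have growth :=
    measureReal_ball_le_of_lintegral_wolff_restrict_ball_le hp hq hC.le ht htR hμ testing
  have ratio_eq : C * (k * t ^ b) / (t ^ (N : ℝ) * v * (1 / 2) ^ q) =
      C * k / (v * (1 / 2) ^ q) * t ^ b / t ^ (N : ℝ) := by
    field_simp
  rw [scale_eq, volume_eq, ratio_eq,
    mul_rpow_mul_mul_rpow_div_rpow _ _ _ (by positivity) ht,
    growth_exponent_eq (sub_pos.2 hp).ne' (by linarith)] at growth
  exact (ENNReal.le_ofReal_iff_toReal_le hμ (by positivity)).2 growth

/-- The ball-wise Wolff potential testing inequality implies a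
growth estimate on the measure of balls. -/
theorem stmt19 (N : ℕ) (α p q : ℝ) (hα : 0 < α) (hp : 1 < p) (hpN : p < (N : ℝ) / α)
    (hq : p - 1 < q) :
    ∀ C : ℝ, 0 < C → ∃ C' > 0, ∀ μ : Measure (Euc N), IsLocallyFiniteMeasure μ →
      (∀ (x : Euc N) (t : ℝ), 0 < t →
        (∫⁻ y, (wolff α p ⊤ (μ.restrict (ball x t)) y) ^ q) ≤
          ENNReal.ofReal C * μ (ball x t)) →
      ∀ (x : Euc N) (t : ℝ), 0 < t →
        μ (ball x t) ≤
          ENNReal.ofReal (C' * t ^ ((N : ℝ) - α * p * q / (q - p + 1))) := by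
  intro C hC
  obtain ⟨C', hC', growth⟩ := stmt19_general N α p q hp hq C hC
  exact ⟨C', hC', fun μ _ testing x t ht => growth μ ⊤ x t ht le_top measure_ball_lt_top.ne
    ((setLIntegral_le_lintegral _ _).trans (testing x t ht))⟩
end
end
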